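/- Let $G$ be a weighted graph on a finite vertex set $V$ with weighted adjacency matrix $A$, let $v \in V$, and let $H$ be a subgraph of $G$ that is connected and sesquivalent (i.e., $H$ is a single edge or a cycle of $G$) with $v \in V(H)$. If $H$ is the only connected sesquivalent subgraph of $G$ whose vertex set contains $v$, then $\det A(G) = \det A(H) \cdot \det A(G - H)$, where $A(H)$ is the weighted adjacency matrix of $H$ (with weights inherited from $G$) and $A(G - H)$ is the principal submatrix of $A$ obtained by deleting all rows and columns indexed by vertices of $H$. -/

import Mathlib

open Finset

variable {V : Type*}

/-- The degree of a vertex `v` in the (sub)graph given by the edge set `H`. -/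
def edgeDeg [Fintype V] [DecidableEq V] (H : Finset (Sym2 V)) (v : V) : ℕ :=
  (H.filter (fun e => v ∈ e)).card

/-- `H` (a finite set of edges, i.e. of unordered pairs of vertices) is a connected
sesquivalent subgraph of the weighted graph with edge-weight function `w`: it is
nonempty, all its edges are genuine edges of the graph (non-loops of nonzero weight),
every vertex it covers has degree 1 or 2 in `H`, no degree-1 vertex is adjacent (in `H`)
to a degree-2 vertex, and any two covered vertices are joined by a path in `H`.
Equivalently, `H` is a single edge (`K₂`) of `G` or a cycle in `G`. -/
def IsConnectedSesquivalent [Fintype V] [DecidableEq V]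
    (w : Sym2 V → ℝ) (H : Finset (Sym2 V)) : Prop :=
  H.Nonempty ∧
  (∀ e ∈ H, ¬ e.IsDiag ∧ w e ≠ 0) ∧
  (∀ v : V, (∃ e ∈ H, v ∈ e) → edgeDeg H v = 1 ∨ edgeDeg H v = 2) ∧
  (∀ u v : V, s(u, v) ∈ H → edgeDeg H u = 1 → edgeDeg H v = 1) ∧
  (∀ u v : V, (∃ e ∈ H, u ∈ e) → (∃ e ∈ H, v ∈ e) →
    (SimpleGraph.fromEdgeSet (↑H : Set (Sym2 V))).Reachable u v)

theorem single_edge_sesq [Fintype V] [DecidableEq V] (w : Sym2 V → ℝ) (a b : V) (hab : a ≠ b)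
    (hw : w s(a, b) ≠ 0) : IsConnectedSesquivalent w {s(a, b)} := by
  have hdeg : ∀ x, x ∈ s(a, b) → edgeDeg ({s(a, b)} : Finset (Sym2 V)) x = 1 := by
    intro x hx
    simp only [edgeDeg]
    rw [Finset.filter_true_of_mem (by intro e he; rw [Finset.mem_singleton] at he; rwa [he])]
    simp
  refine ⟨by simp, ?_, ?_, ?_, ?_⟩
  · intro e he
    rw [Finset.mem_singleton] at he
    subst he
    exact ⟨by simpa using hab, hw⟩
  · rintro x ⟨e, he, hx⟩
    rw [Finset.mem_singleton] at he
    subst he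
    exact Or.inl (hdeg x hx)
  · intro x y hxy _
    rw [Finset.mem_singleton] at hxy
    exact hdeg y (by rw [← hxy]; simp)
  · rintro x y ⟨e, he, hx⟩ ⟨f, hf, hy⟩
    rw [Finset.mem_singleton] at he hf
    subst he hf
    have hadj : (SimpleGraph.fromEdgeSet
        (↑({s(a, b)} : Finset (Sym2 V)) : Set (Sym2 V))).Adj a b := by
      simp [hab]
    rw [Sym2.mem_iff] at hx hy
    rcases hx with rfl | rfl <;> rcases hy with rfl | rfl
    · exact SimpleGraph.Reachable.refl _
    · exact hadj.reachable
    · exact hadj.symm.reachable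
    · exact SimpleGraph.Reachable.refl _

/-- **Corollary 2**.  Let `G` be a weighted graph on a finite vertex set `V` with
weighted adjacency matrix `A` (symmetric, zero diagonal) and edge-weight function `w`
(so `w s(u,v) = A u v`).  Let `v ∈ V` and let `H` be a connected sesquivalent subgraph
of `G` (a single edge or a cycle) whose vertex set contains `v`.  If `H` is the *only*
connected sesquivalent subgraph of `G` whose vertex set contains `v`, then
`det A(G) = det A(H) * det A(G - H)`, where `A(H)` is the weighted adjacency matrix of
`H` (indexed by the vertices covered by `H`, with weights inherited from `G`) and
`A(G - H)` is the principal submatrix of `A` on the vertices not covered by `H`. -/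
theorem det_eq_det_unique_sesquivalent_mul {V : Type*} [Fintype V] [DecidableEq V]
    (A : Matrix V V ℝ)
    (hsym : ∀ u v : V, A u v = A v u) (hdiag : ∀ v : V, A v v = 0)
    (w : Sym2 V → ℝ) (hw : ∀ u v : V, w s(u, v) = A u v)
    (v : V) (H : Finset (Sym2 V))
    (hH : IsConnectedSesquivalent w H) (hvH : ∃ e ∈ H, v ∈ e)
    (huniq : ∀ H' : Finset (Sym2 V),
      IsConnectedSesquivalent w H' → (∃ e ∈ H', v ∈ e) → H' = H) :
    A.det =
      Matrix.det (Matrix.of fun a b : {u : V // ∃ e ∈ H, u ∈ e} =>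
        if s(a.1, b.1) ∈ H then A a.1 b.1 else 0) *
      Matrix.det (Matrix.of fun a b : {u : V // ¬ ∃ e ∈ H, u ∈ e} => A a.1 b.1) := by
  classical
  obtain ⟨e, heH, hve⟩ := hvH
  obtain ⟨u, rfl⟩ := Sym2.mem_iff_exists.mp hve
  obtain ⟨hnd, hwe⟩ := hH.2.1 _ heH
  have hvu : v ≠ u := by simpa using hnd
  have hHe : H = {s(v, u)} := 
    (huniq _ (single_edge_sesq w v u hvu hwe) ⟨_, Finset.mem_singleton_self _, by simp⟩).symm
  have hrow : ∀ x, x ≠ u → A v x = 0 := by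
    intro x hx
    by_contra h
    have hvx : v ≠ x := by
      rintro rfl
      exact h (hdiag v)
    have h2 := huniq _ (single_edge_sesq w v x hvx (by rwa [hw])) ⟨_, Finset.mem_singleton_self _, by simp⟩
    rw [hHe, Finset.singleton_inj] at h2
    exact hx (by simpa [hvu] using h2)
  rw [hw] at hwe
  clear huniq hH
  subst hHe
  have hp : ∀ x : V, (∃ e ∈ ({s(v, u)} : Finset (Sym2 V)), x ∈ e) ↔ x = v ∨ x = u := by
    intro x
    simp
  set p : V → Prop := fun x => ∃ e ∈ ({s(v, u)} : Finset (Sym2 V)), x ∈ e with hpdef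
  have hpv : p v := (hp v).2 (Or.inl rfl)
  have hpu : p u := (hp u).2 (Or.inr rfl)
  let c : V → ℝ := fun j => if p j then 0 else - A u j / A v u
  let B : Matrix V V ℝ := Matrix.of fun i j => A i j + c j * A i v
  have hBA : B.det = A.det := by
    rw [← Matrix.det_transpose B, ← Matrix.det_transpose A]
    exact Matrix.det_eq_of_forall_row_eq_smul_add_const c v (by simp [c, hpv]) (fun i j => rfl)
  have htri : ∀ i, p i → ∀ j, ¬ p j → B i j = 0 := by
    intro i hi j hj
    have hju : j ≠ u := by
      rintro rfl
      exact hj hpu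
    rcases (hp i).1 hi with rfl | rfl
    · simp [B, hrow j hju, hdiag]
    · simp only [B, c, Matrix.of_apply, if_neg hj]
      rw [hsym i v]
      field_simp
      ring
  rw [← hBA, Matrix.twoBlockTriangular_det' B p htri]
  congr 1
  · congr! 1
    ext ⟨a, ha⟩ ⟨b, hb⟩
    have hc : c b = 0 := if_pos hb
    simp only [Matrix.toSquareBlockProp_def, Matrix.of_apply, B, hc]
    rcases (hp a).1 ha with rfl | rfl <;> rcases (hp b).1 hb with rfl | rfl <;>
      simp [hdiag, Sym2.eq_swap]
  · congr! 1
    ext ⟨a, ha⟩ ⟨b, hb⟩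
    have hau : a ≠ u := by
      rintro rfl
      exact ha hpu
    simp [Matrix.toSquareBlockProp_def, B, hsym a v, hrow a hau]
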